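/- Let α ∈ (0,1) be irrational with continued fraction convergents p_k/q_k, let τ > 0, τ₁ = 2/τ + 6, E = {k ∈ ℕ : k > 1 and q_{k+1} > q_k^{1/τ+3}}, and M = ⋃_{k∈E} {±m q_k : m = 1,…,a_k}, where a_k are the partial quotients of α. Let (c_m)_{m∈ℤ} be complex numbers such that |c_m| ≤ C|m|^{−τ₁} for all m ≠ 0 and some constant C > 0. Then the series ∑_{m ∉ M∪{0}} c_m · e(mx)/(e(mα)−1), where e(θ) = e^{2πiθ}, converges uniformly in x ∈ ℝ/ℤ to a continuous function ψ : ℝ/ℤ → ℂ. -/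

import Mathlib

open MeasureTheory Filter Real

/-!
Write `qₖ` for the denominators of the convergents of `ξ`. If `|mξ - n| < 1 / (2|m|)`, then `n / m`
is a convergent by a theorem of Legendre, so `qₖ ∣ m`, and then `1 / (2qₖ₊₁) ≤ |mξ - n|`. The two
inequalities give `|m| < qₖ₊₁`; so, when `m` is not resonant, `qₖ₊₁` is at most `qₖˢ ≤ |m|ˢ` unless
`k = 0`. Hence `|e(mξ) - 1|` is at least a constant times `|m|⁻ˢ` off the resonant set, and
coefficients decaying like `|m|^(-σ)` with `σ > s + 1` make the series converge absolutely in the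
sup norm.
-/

section Convergents

open GenContFract in
theorem exists_int_eq_contsAux {K : Type*} [Field K] [LinearOrder K] [FloorRing K]
    (v : K) (n : ℕ) : ∃ p q : ℤ, (GenContFract.of v).contsAux n = ⟨p, q⟩ := by
  induction n using Nat.twoStepInduction with
  | zero => exact ⟨1, 0, by simp [zeroth_contAux_eq_one_zero]⟩
  | one => exact ⟨⌊v⌋, 1, by simp [first_contAux_eq_h_one, of_h_eq_floor]⟩
  | more n ih₀ ih₁ =>
    obtain ⟨p₀, q₀, h₀⟩ := ih₀
    obtain ⟨p₁, q₁, h₁⟩ := ih₁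
    cases hs : (GenContFract.of v).s.get? n with
    | none => exact ⟨p₁, q₁, (contsAux_stable_of_terminated n.succ.le_succ hs).trans h₁⟩
    | some gp =>
      obtain ⟨ha, z, hb⟩ := of_partNum_eq_one_and_exists_int_partDen_eq hs
      refine ⟨z * p₁ + p₀, z * q₁ + q₀, ?_⟩
      rw [contsAux_recurrence hs h₀ h₁, ha, hb]
      push_cast
      simp only [one_mul]

theorem one_le_dens {K : Type*} [Field K] [LinearOrder K] [IsStrictOrderedRing K] [FloorRing K]
    (v : K) (n : ℕ) : 1 ≤ (GenContFract.of v).dens n := by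
  have hmono : Monotone (GenContFract.of v).dens :=
    monotone_nat_of_le_succ fun _ => GenContFract.of_den_mono
  exact GenContFract.zeroth_den_eq_one.ge.trans (hmono n.zero_le)

variable {ξ : ℝ}

theorem not_terminatedAt_of_irrational (hξ : Irrational ξ) (n : ℕ) :
    ¬(GenContFract.of ξ).TerminatedAt n := fun h =>
  let ⟨r, hr⟩ := (GenContFract.terminates_iff_rat ξ).1 ⟨n, h⟩
  hξ ⟨r, hr.symm⟩

theorem nums_mul_dens_succ_sub_of_irrational (hξ : Irrational ξ) (n : ℕ) :
    (GenContFract.of ξ).nums n * (GenContFract.of ξ).dens (n + 1) -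
      (GenContFract.of ξ).dens n * (GenContFract.of ξ).nums (n + 1) = (-1) ^ (n + 1) :=
  (SimpContFract.of ξ).determinant (not_terminatedAt_of_irrational hξ n)

theorem exists_isCoprime_nums_dens (hξ : Irrational ξ) (n : ℕ) :
    ∃ p q : ℤ, IsCoprime p q ∧ (GenContFract.of ξ).nums n = p ∧ (GenContFract.of ξ).dens n = q := by
  obtain ⟨p, q, hpq⟩ := exists_int_eq_contsAux ξ (n + 1)
  obtain ⟨p', q', hpq'⟩ := exists_int_eq_contsAux ξ (n + 2)
  have hnum : (GenContFract.of ξ).nums n = p := congrArg GenContFract.Pair.a hpq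
  have hden : (GenContFract.of ξ).dens n = q := congrArg GenContFract.Pair.b hpq
  have hnum' : (GenContFract.of ξ).nums (n + 1) = p' := congrArg GenContFract.Pair.a hpq'
  have hden' : (GenContFract.of ξ).dens (n + 1) = q' := congrArg GenContFract.Pair.b hpq'
  have hdet : p * q' - q * p' = (-1) ^ (n + 1) := by
    have h := nums_mul_dens_succ_sub_of_irrational hξ n
    rw [hnum, hden, hnum', hden'] at h
    exact_mod_cast h
  refine ⟨p, q, ⟨(-1) ^ (n + 1) * q', -(-1) ^ (n + 1) * p', ?_⟩, hnum, hden⟩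
  calc (-1) ^ (n + 1) * q' * p + -(-1) ^ (n + 1) * p' * q
      = (-1) ^ (n + 1) * (p * q' - q * p') := by ring
    _ = 1 := by rw [hdet, ← mul_pow]; norm_num

theorem dens_eq_den_convergent (hξ : Irrational ξ) (n : ℕ) :
    (GenContFract.of ξ).dens n = (ξ.convergent n).den := by
  obtain ⟨p, q, hpq, hp, hq⟩ := exists_isCoprime_nums_dens hξ n
  have hq_pos : 0 < q := by
    exact_mod_cast hq ▸ zero_lt_one.trans_le (one_le_dens ξ n)
  have hconv : ξ.convergent n = (p : ℚ) / q := by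
    have h := Real.convs_eq_convergent ξ n
    rw [GenContFract.conv_eq_num_div_den, hp, hq] at h
    exact_mod_cast h.symm
  rw [hq, hconv]
  exact_mod_cast (Rat.den_div_eq_of_coprime hq_pos (Int.isCoprime_iff_gcd_eq_one.1 hpq)).symm

theorem den_convergent_monotone (hξ : Irrational ξ) : Monotone fun n => (ξ.convergent n).den := by
  refine monotone_nat_of_le_succ fun n => ?_
  have h := GenContFract.of_den_mono (v := ξ) (n := n)
  rw [dens_eq_den_convergent hξ, dens_eq_den_convergent hξ] at h
  exact_mod_cast h

theorem den_convergent_add_den_convergent_succ_le (hξ : Irrational ξ) (n : ℕ) :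
    (ξ.convergent n).den + (ξ.convergent (n + 1)).den ≤ (ξ.convergent (n + 2)).den := by
  obtain ⟨gp, hgp⟩ : ∃ gp, (GenContFract.of ξ).s.get? (n + 1) = some gp :=
    Option.ne_none_iff_exists'.1 (not_terminatedAt_of_irrational hξ (n + 1))
  have ha : gp.a = 1 := (GenContFract.of_partNum_eq_one_and_exists_int_partDen_eq hgp).1
  have hb : 1 ≤ gp.b := GenContFract.of_one_le_get?_partDen (GenContFract.partDen_eq_s_b hgp)
  have hrec := GenContFract.dens_recurrence hgp rfl rfl
  rw [dens_eq_den_convergent hξ, dens_eq_den_convergent hξ, dens_eq_den_convergent hξ, ha] at hrec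
  have hle : ((ξ.convergent n).den + (ξ.convergent (n + 1)).den : ℝ) ≤
      (ξ.convergent (n + 2)).den := by
    rw [hrec]
    linarith [le_mul_of_one_le_left (Nat.cast_nonneg (α := ℝ) (ξ.convergent (n + 1)).den) hb]
  exact_mod_cast hle

theorem two_mul_den_convergent_le (hξ : Irrational ξ) (n : ℕ) :
    2 * (ξ.convergent n).den ≤ (ξ.convergent (n + 2)).den := by
  have hmono : (ξ.convergent n).den ≤ (ξ.convergent (n + 1)).den :=
    den_convergent_monotone hξ n.le_succ
  have hadd := den_convergent_add_den_convergent_succ_le hξ n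
  lia

theorem abs_convergent_sub_convergent_succ (hξ : Irrational ξ) (n : ℕ) :
    |(ξ.convergent n - ξ.convergent (n + 1) : ℝ)| =
      1 / ((ξ.convergent n).den * (ξ.convergent (n + 1)).den) := by
  have hd := (zero_lt_one.trans_le (one_le_dens ξ n)).ne'
  have hd' := (zero_lt_one.trans_le (one_le_dens ξ (n + 1))).ne'
  rw [← Real.convs_eq_convergent, ← Real.convs_eq_convergent, GenContFract.conv_eq_num_div_den,
    GenContFract.conv_eq_num_div_den, div_sub_div _ _ hd hd',
    nums_mul_dens_succ_sub_of_irrational hξ, abs_div, abs_neg_one_pow, abs_mul,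
    dens_eq_den_convergent hξ, dens_eq_den_convergent hξ, Nat.abs_cast, Nat.abs_cast]

-- The triangle inequality through the next convergent, whose error is at most half of the distance
-- between the two convergents.
theorem one_div_le_abs_sub_convergent (hξ : Irrational ξ) (n : ℕ) :
    1 / (2 * (ξ.convergent n).den * (ξ.convergent (n + 1)).den) ≤ |ξ - ξ.convergent n| := by
  have hd : (0 : ℝ) < (ξ.convergent n).den := Nat.cast_pos.2 (ξ.convergent n).den_pos
  have hd' : (0 : ℝ) < (ξ.convergent (n + 1)).den := Nat.cast_pos.2 (ξ.convergent (n + 1)).den_pos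
  have hd'' : (2 * (ξ.convergent n).den : ℝ) ≤ (ξ.convergent (n + 2)).den := by
    exact_mod_cast two_mul_den_convergent_le hξ n
  have herror : |ξ - ξ.convergent (n + 1)| ≤
      1 / ((ξ.convergent (n + 1)).den * (ξ.convergent (n + 2)).den) := by
    have h := GenContFract.abs_sub_convs_le (not_terminatedAt_of_irrational hξ (n + 1))
    rwa [Real.convs_eq_convergent, dens_eq_den_convergent hξ, dens_eq_den_convergent hξ] at h
  have hgap := abs_convergent_sub_convergent_succ hξ n
  set d : ℝ := ((ξ.convergent n).den : ℝ)
  set d' : ℝ := ((ξ.convergent (n + 1)).den : ℝ)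
  set d'' : ℝ := ((ξ.convergent (n + 2)).den : ℝ)
  have hhalf : 1 / (d' * d'') ≤ 1 / (2 * d * d') := by
    rw [mul_comm d' d'']
    gcongr
  have htriangle : 1 / (d * d') ≤ |ξ - ξ.convergent n| + |ξ - ξ.convergent (n + 1)| := by
    rw [← hgap, abs_sub_comm ξ (ξ.convergent n)]
    exact abs_sub_le _ ξ _
  have hsplit : 1 / (d * d') = 1 / (2 * d * d') + 1 / (2 * d * d') := by ring
  linarith

theorem den_intCast_div_intCast_dvd (n m : ℤ) : ((n / m : ℚ).den : ℤ) ∣ m := by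
  simpa only [Rat.divInt_eq_div] using Rat.den_dvd n m

theorem abs_mul_abs_sub_div (ξ : ℝ) {m : ℤ} (hm : m ≠ 0) (n : ℤ) :
    |(m : ℝ)| * |ξ - (n / m : ℚ)| = |m * ξ - n| := by
  have hm' : (m : ℝ) ≠ 0 := Int.cast_ne_zero.2 hm
  rw [← abs_mul]
  push_cast
  rw [mul_sub, mul_div_cancel₀ _ hm']

theorem exists_convergent_eq_div_of_abs_mul_sub_lt {m : ℤ} (hm : m ≠ 0) {n : ℤ}
    (h : |m * ξ - n| < 1 / (2 * |(m : ℝ)|)) : ∃ k, ξ.convergent k = n / m := by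
  have hm_pos : 0 < |(m : ℝ)| := abs_pos.2 (Int.cast_ne_zero.2 hm)
  have : (0 : ℝ) < (n / m : ℚ).den := Nat.cast_pos.2 (n / m : ℚ).den_pos
  have hden : ((n / m : ℚ).den : ℝ) ≤ |(m : ℝ)| := by
    exact_mod_cast Int.le_of_dvd (abs_pos.2 hm)
      ((dvd_abs _ _).2 (den_intCast_div_intCast_dvd n m))
  obtain ⟨k, hk⟩ := Real.exists_rat_eq_convergent (ξ := ξ) (q := n / m) <| by
    calc |ξ - (n / m : ℚ)| = |m * ξ - n| / |(m : ℝ)| := by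
          rw [← abs_mul_abs_sub_div ξ hm, mul_div_cancel_left₀ _ hm_pos.ne']
      _ < 1 / (2 * |(m : ℝ)|) / |(m : ℝ)| := by gcongr
      _ = 1 / (2 * |(m : ℝ)| ^ 2) := by field_simp
      _ ≤ 1 / (2 * ((n / m : ℚ).den : ℝ) ^ 2) := by gcongr
  exact ⟨k, hk.symm⟩

theorem exists_den_convergent_dvd_of_abs_mul_sub_lt (hξ : Irrational ξ) {m : ℤ} (hm : m ≠ 0)
    {n : ℤ} (h : |m * ξ - n| < 1 / (2 * |(m : ℝ)|)) :
    ∃ k, ((ξ.convergent k).den : ℤ) ∣ m ∧ |m| < (ξ.convergent (k + 1)).den ∧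
      1 / (2 * ((ξ.convergent (k + 1)).den : ℝ)) ≤ |m * ξ - n| := by
  obtain ⟨k, hk⟩ := exists_convergent_eq_div_of_abs_mul_sub_lt hm h
  have hdvd : ((ξ.convergent k).den : ℤ) ∣ m := hk ▸ den_intCast_div_intCast_dvd n m
  have hlower := one_div_le_abs_sub_convergent hξ k
  have hd : (0 : ℝ) < (ξ.convergent k).den := Nat.cast_pos.2 (ξ.convergent k).den_pos
  have hd' : (0 : ℝ) < (ξ.convergent (k + 1)).den := Nat.cast_pos.2 (ξ.convergent (k + 1)).den_pos
  have hdm : ((ξ.convergent k).den : ℝ) ≤ |(m : ℝ)| := by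
    exact_mod_cast Int.le_of_dvd (abs_pos.2 hm) ((dvd_abs _ _).2 hdvd)
  refine ⟨k, hdvd, ?_⟩
  rw [← Int.cast_lt (R := ℝ), Int.cast_abs, Int.cast_natCast]
  set d : ℝ := ((ξ.convergent k).den : ℝ)
  set d' : ℝ := ((ξ.convergent (k + 1)).den : ℝ)
  have hbound : 1 / (2 * d') ≤ |m * ξ - n| := by
    calc 1 / (2 * d') = d * (1 / (2 * d * d')) := by field_simp
      _ ≤ |(m : ℝ)| * |ξ - (n / m : ℚ)| := by rw [← hk]; gcongr
      _ = |m * ξ - n| := abs_mul_abs_sub_div ξ hm n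
  have hlt : |(m : ℝ)| < d' := by
    have : 0 < |(m : ℝ)| := hd.trans_le hdm
    have hinv := lt_of_one_div_lt_one_div (by positivity) (hbound.trans_lt h)
    linarith
  exact ⟨hlt, hbound⟩

end Convergents

section SmallDivisors

variable {ξ s : ℝ}

/-- The resonant set of `ξ` with exponent `s`: the nonzero multiples `m` of the denominator `qₖ` of
the `k`-th convergent with `|m| < qₖ₊₁`, over the indices `k` with `qₖ₊₁ > qₖˢ`. Convergents are
indexed from `0`, as in `Real.convergent`, so that the condition `k > 1` of the theorem becomes
`0 < k`; the set `M` of the theorem contains this one. -/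
def resonantSet (ξ s : ℝ) : Set ℤ :=
  {m | m ≠ 0 ∧ ∃ k, 0 < k ∧ ((ξ.convergent k).den : ℝ) ^ s < (ξ.convergent (k + 1)).den ∧
    ((ξ.convergent k).den : ℤ) ∣ m ∧ |m| < (ξ.convergent (k + 1)).den}

theorem den_convergent_succ_le_of_notMem_resonantSet (hs : 0 ≤ s) {m : ℤ} (hm : m ≠ 0)
    (hres : m ∉ resonantSet ξ s) {k : ℕ} (hk : 0 < k) (hdvd : ((ξ.convergent k).den : ℤ) ∣ m)
    (hlt : |m| < (ξ.convergent (k + 1)).den) :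
    ((ξ.convergent (k + 1)).den : ℝ) ≤ |(m : ℝ)| ^ s := by
  have hdm : ((ξ.convergent k).den : ℝ) ≤ |(m : ℝ)| := by
    exact_mod_cast Int.le_of_dvd (abs_pos.2 hm) ((dvd_abs _ _).2 hdvd)
  calc ((ξ.convergent (k + 1)).den : ℝ) ≤ ((ξ.convergent k).den : ℝ) ^ s :=
        not_lt.1 fun h => hres ⟨hm, k, hk, h, hdvd, hlt⟩
    _ ≤ |(m : ℝ)| ^ s := by gcongr

theorem one_div_le_abs_mul_sub_of_notMem_resonantSet (hξ : Irrational ξ) (hs : 1 ≤ s) {m : ℤ}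
    (hm : m ≠ 0) (hres : m ∉ resonantSet ξ s) (n : ℤ) :
    1 / (2 * ((ξ.convergent 1).den * |(m : ℝ)| ^ s)) ≤ |m * ξ - n| := by
  have hd : (1 : ℝ) ≤ (ξ.convergent 1).den := Nat.one_le_cast.2 (ξ.convergent 1).den_pos
  have hm_one : 1 ≤ |(m : ℝ)| := by exact_mod_cast Int.one_le_abs hm
  have hms : 1 ≤ |(m : ℝ)| ^ s := one_le_rpow hm_one (zero_le_one.trans hs)
  rcases lt_or_ge |m * ξ - n| (1 / (2 * |(m : ℝ)|)) with hsmall | hlarge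
  · obtain ⟨k, hdvd, hlt, hbound⟩ := exists_den_convergent_dvd_of_abs_mul_sub_lt hξ hm hsmall
    have hnext : ((ξ.convergent (k + 1)).den : ℝ) ≤ (ξ.convergent 1).den * |(m : ℝ)| ^ s := by
      rcases k.eq_zero_or_pos with rfl | hk
      · exact le_mul_of_one_le_right (Nat.cast_nonneg _) hms
      · exact (den_convergent_succ_le_of_notMem_resonantSet (zero_le_one.trans hs) hm hres hk
          hdvd hlt).trans (le_mul_of_one_le_left (zero_le_one.trans hms) hd)
    have : (0 : ℝ) < (ξ.convergent (k + 1)).den :=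
      Nat.cast_pos.2 (ξ.convergent (k + 1)).den_pos
    exact le_trans (by gcongr) hbound
  · have hm_le : |(m : ℝ)| ≤ (ξ.convergent 1).den * |(m : ℝ)| ^ s :=
      (self_le_rpow_of_one_le hm_one hs).trans (le_mul_of_one_le_left (zero_le_one.trans hms) hd)
    exact le_trans (by gcongr) hlarge

theorem four_mul_abs_sub_round_le_norm_exp_sub_one (t : ℝ) :
    4 * |t - round t| ≤ ‖Complex.exp (2 * π * Complex.I * t) - 1‖ := by
  have hperiod : Complex.exp (2 * π * Complex.I * t) =
      Complex.exp (Complex.I * ((2 * π * (t - round t) : ℝ) : ℂ)) := by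
    refine Complex.exp_eq_exp_iff_exists_int.2 ⟨round t, ?_⟩
    push_cast
    ring
  have hnorm : ‖Complex.exp (2 * π * Complex.I * t) - 1‖ = 2 * |sin (π * (t - round t))| := by
    rw [hperiod, Complex.norm_exp_I_mul_ofReal_sub_one, norm_mul, Real.norm_ofNat,
      Real.norm_eq_abs, mul_assoc, mul_div_cancel_left₀ _ two_ne_zero]
  have habs : |π * (t - round t)| = π * |t - round t| := by rw [abs_mul, abs_of_pos pi_pos]
  have hsin : 2 * |t - round t| ≤ |sin (π * (t - round t))| := by
    calc 2 * |t - round t| = 2 / π * |π * (t - round t)| := by rw [habs]; field_simp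
      _ ≤ |sin (π * (t - round t))| := mul_abs_le_abs_sin <| by
        rw [habs]
        calc π * |t - round t| ≤ π * (1 / 2) := by gcongr; exact abs_sub_round t
          _ = π / 2 := by ring
  linarith

theorem two_div_le_norm_exp_sub_one_of_notMem_resonantSet (hξ : Irrational ξ) (hs : 1 ≤ s)
    {m : ℤ} (hm : m ≠ 0) (hres : m ∉ resonantSet ξ s) :
    2 / ((ξ.convergent 1).den * |(m : ℝ)| ^ s) ≤
      ‖Complex.exp (2 * π * Complex.I * m * ξ) - 1‖ := by
  calc 2 / ((ξ.convergent 1).den * |(m : ℝ)| ^ s)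
      = 4 * (1 / (2 * ((ξ.convergent 1).den * |(m : ℝ)| ^ s))) := by ring
    _ ≤ 4 * |m * ξ - round (m * ξ)| := by
        gcongr
        exact one_div_le_abs_mul_sub_of_notMem_resonantSet hξ hs hm hres _
    _ ≤ ‖Complex.exp (2 * π * Complex.I * m * ξ) - 1‖ := by
        simpa only [Complex.ofReal_mul, Complex.ofReal_intCast, mul_assoc] using
          four_mul_abs_sub_round_le_norm_exp_sub_one (m * ξ)

theorem norm_div_exp_sub_one_le_of_notMem_resonantSet (hξ : Irrational ξ) (hs : 1 ≤ s)
    {m : ℤ} (hm : m ≠ 0) (hres : m ∉ resonantSet ξ s) {z : ℂ} {C σ : ℝ}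
    (hz : ‖z‖ ≤ C * |(m : ℝ)| ^ (-σ)) :
    ‖z / (Complex.exp (2 * π * Complex.I * m * ξ) - 1)‖ ≤
      C * (ξ.convergent 1).den / 2 * |(m : ℝ)| ^ (-(σ - s)) := by
  have hm_pos : 0 < |(m : ℝ)| := abs_pos.2 (Int.cast_ne_zero.2 hm)
  have : (0 : ℝ) < (ξ.convergent 1).den := Nat.cast_pos.2 (ξ.convergent 1).den_pos
  calc ‖z / (Complex.exp (2 * π * Complex.I * m * ξ) - 1)‖
      ≤ ‖z‖ / (2 / ((ξ.convergent 1).den * |(m : ℝ)| ^ s)) := by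
        rw [norm_div]
        gcongr
        exact two_div_le_norm_exp_sub_one_of_notMem_resonantSet hξ hs hm hres
    _ ≤ C * |(m : ℝ)| ^ (-σ) / (2 / ((ξ.convergent 1).den * |(m : ℝ)| ^ s)) := by gcongr
    _ = C * (ξ.convergent 1).den / 2 * (|(m : ℝ)| ^ (-σ) * |(m : ℝ)| ^ s) := by
        rw [div_div_eq_mul_div]
        ring
    _ = C * (ξ.convergent 1).den / 2 * |(m : ℝ)| ^ (-(σ - s)) := by
        rw [← rpow_add hm_pos, neg_sub, sub_eq_neg_add]

theorem summable_smul_fourier {T : ℝ} [Fact (0 < T)] {S : Set ℤ} {b : ℤ → ℂ} {K r : ℝ}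
    (hr : 1 < r) (hb : ∀ m ∈ S, ‖b m‖ ≤ K * |(m : ℝ)| ^ (-r)) :
    Summable fun m : S => b m • (fourier (m : ℤ) : C(AddCircle T, ℂ)) := by
  have hmajorant : Summable fun m : S => K * |((m : ℤ) : ℝ)| ^ (-r) :=
    ((summable_abs_int_rpow hr).mul_left K).subtype S
  refine Summable.of_norm_bounded hmajorant fun m => ?_
  rw [norm_smul, fourier_norm, mul_one]
  exact hb m m.2

theorem uniform_convergence_off_resonant_set_general (hξ : Irrational ξ) (hs : 1 ≤ s) {σ : ℝ}
    (hσ : s + 1 < σ) {M : Set ℤ} (hM : resonantSet ξ s ⊆ M) {c : ℤ → ℂ} {C : ℝ}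
    (hdecay : ∀ m : ℤ, m ≠ 0 → ‖c m‖ ≤ C * |(m : ℝ)| ^ (-σ)) :
    ∃ ψ : C(AddCircle (1 : ℝ), ℂ),
      HasSum (fun m : {m : ℤ // m ∉ M ∧ m ≠ 0} =>
        (c m / (Complex.exp (2 * π * Complex.I * (m : ℤ) * ξ) - 1)) • fourier (m : ℤ)) ψ :=
  ⟨_, (summable_smul_fourier (S := {m | m ∉ M ∧ m ≠ 0}) (r := σ - s)
    (b := fun m => c m / (Complex.exp (2 * π * Complex.I * m * ξ) - 1)) (by linarith)
    fun m hm => norm_div_exp_sub_one_le_of_notMem_resonantSet hξ hs hm.2 (fun h => hm.1 (hM h))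
      (hdecay m hm.2)).hasSum⟩

end SmallDivisors

section GaussMap

variable {α : ℝ} {a : ℕ → ℕ} {β : ℕ → ℝ} {q : ℕ → ℕ}

theorem fr_ne_zero_of_irrational (hα : Irrational α) {n : ℕ} {p : GenContFract.IntFractPair ℝ}
    (hp : GenContFract.IntFractPair.stream α n = some p) : p.fr ≠ 0 := fun h =>
  not_terminatedAt_of_irrational hα n <|
    GenContFract.of_terminatedAt_n_iff_succ_nth_intFractPair_stream_eq_none.2 <|
      GenContFract.IntFractPair.stream_eq_none_of_fr_eq_zero hp h

theorem exists_stream_eq_of_gauss (hirr : Irrational α) (hα : α ∈ Set.Ico (0 : ℝ) 1)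
    (hβ1 : β 1 = α)
    (hGauss : ∀ k : ℕ, 1 ≤ k → (a k : ℤ) = ⌊1 / β k⌋ ∧ β (k + 1) = 1 / β k - a k) (n : ℕ) :
    ∃ b : ℤ, GenContFract.IntFractPair.stream α n = some ⟨b, β (n + 1)⟩ := by
  induction n with
  | zero =>
    refine ⟨⌊α⌋, ?_⟩
    rw [GenContFract.IntFractPair.stream_zero, GenContFract.IntFractPair.of,
      Int.fract_eq_self.2 ⟨hα.1, hα.2⟩, hβ1]
  | succ n ih =>
    obtain ⟨b, hb⟩ := ih
    obtain ⟨ha, hβ⟩ := hGauss (n + 1) n.succ_pos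
    refine ⟨⌊(β (n + 1))⁻¹⌋, ?_⟩
    rw [GenContFract.IntFractPair.stream_succ_of_some hb (fr_ne_zero_of_irrational hirr hb),
      GenContFract.IntFractPair.of, hβ, one_div, Int.fract, ← one_div, ← ha, Int.cast_natCast]

theorem get?_s_eq_of_gauss (hirr : Irrational α) (hα : α ∈ Set.Ico (0 : ℝ) 1) (hβ1 : β 1 = α)
    (hGauss : ∀ k : ℕ, 1 ≤ k → (a k : ℤ) = ⌊1 / β k⌋ ∧ β (k + 1) = 1 / β k - a k) (n : ℕ) :
    (GenContFract.of α).s.get? n = some ⟨1, a (n + 1)⟩ := by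
  obtain ⟨b, hb⟩ := exists_stream_eq_of_gauss hirr hα hβ1 hGauss n
  rw [GenContFract.get?_of_eq_some_of_get?_intFractPair_stream_fr_ne_zero hb
    (fr_ne_zero_of_irrational hirr hb), GenContFract.IntFractPair.of, ← one_div,
    ← (hGauss (n + 1) n.succ_pos).1, Int.cast_natCast]

theorem dens_eq_of_recurrence
    (ha : ∀ n, (GenContFract.of α).s.get? n = some ⟨1, a (n + 1)⟩) (hq1 : q 1 = 1)
    (hq2 : q 2 = a 1) (hqrec : ∀ k : ℕ, 2 ≤ k → q (k + 1) = a k * q k + q (k - 1)) (n : ℕ) :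
    (GenContFract.of α).dens n = q (n + 1) := by
  induction n using Nat.twoStepInduction with
  | zero => rw [GenContFract.zeroth_den_eq_one, hq1, Nat.cast_one]
  | one => rw [GenContFract.first_den_eq (ha 0), hq2]
  | more n ih₀ ih₁ =>
    have hrec : q (n + 3) = a (n + 2) * q (n + 2) + q (n + 1) := hqrec (n + 2) (by lia)
    rw [GenContFract.dens_recurrence (ha (n + 1)) ih₀ ih₁, hrec, one_mul]
    push_cast
    rfl

theorem resonantSet_subset_of_den_convergent_eq (hirr : Irrational α)
    (hq : ∀ n, (α.convergent n).den = q (n + 1))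
    (hqrec : ∀ k : ℕ, 2 ≤ k → q (k + 1) = a k * q k + q (k - 1)) (s : ℝ) :
    resonantSet α s ⊆ {m : ℤ | ∃ k ∈ {k : ℕ | 1 < k ∧ (q k : ℝ) ^ s < (q (k + 1) : ℝ)},
      ∃ j : ℕ, 1 ≤ j ∧ j ≤ a k ∧ (m = (j * q k : ℕ) ∨ m = -((j * q k : ℕ) : ℤ))} := by
  rintro m ⟨hm, k, hk, hlarge, hdvd, hlt⟩
  obtain ⟨i, rfl⟩ := Nat.exists_eq_add_one.2 hk
  have hmono : q (i + 1) ≤ q (i + 2) := by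
    simpa only [hq] using den_convergent_monotone hirr i.le_succ
  have hrec : q (i + 3) = a (i + 2) * q (i + 2) + q (i + 1) := hqrec (i + 2) (by lia)
  rw [hq, hq] at hlarge
  rw [hq] at hdvd
  rw [hq, Int.abs_eq_natAbs, Nat.cast_lt] at hlt
  obtain ⟨j, hj⟩ := Int.natCast_dvd.1 hdvd
  have hj_lt : q (i + 2) * j < q (i + 2) * (a (i + 2) + 1) := by
    calc q (i + 2) * j = m.natAbs := hj.symm
      _ < a (i + 2) * q (i + 2) + q (i + 1) := hlt.trans_eq hrec
      _ ≤ a (i + 2) * q (i + 2) + q (i + 2) := by gcongr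
      _ = q (i + 2) * (a (i + 2) + 1) := by ring
  have hj_pos : 0 < j := Nat.pos_of_ne_zero fun h => hm (by simpa [h] using hj)
  have hj_le : j ≤ a (i + 2) := Nat.lt_succ_iff.1 (Nat.lt_of_mul_lt_mul_left hj_lt)
  refine ⟨i + 2, ⟨by lia, hlarge⟩, j, hj_pos, hj_le, ?_⟩
  rw [mul_comm j, ← hj]
  exact Int.natAbs_eq m

end GaussMap

/-- Uniform convergence of the series `∑_{m ∉ M∪{0}} c_m e(mx)/(e(mα)−1)` for coefficients with
polynomial decay, where `M` is the set of multiples `±m·q_k`, `1 ≤ m ≤ a_k`, of the continued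
fraction denominators `q_k` of `α` over indices `k` with `q_{k+1} > q_k^{1/τ+3}`.
The continued fraction data `(a_k)`, `(q_k)` of `α` is characterized via the Gauss map. -/
theorem uniform_convergence_off_resonant_set
    (α : ℝ) (hirr : Irrational α) (hα : α ∈ Set.Ioo (0 : ℝ) 1)
    -- the partial quotients `a_k` of `α`, via the Gauss map
    (a : ℕ → ℕ) (β : ℕ → ℝ) (hβ1 : β 1 = α)
    (hGauss : ∀ k : ℕ, 1 ≤ k → (a k : ℤ) = ⌊1 / β k⌋ ∧ β (k + 1) = 1 / β k - a k)
    -- the denominators `q_k` of the convergents of `α`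
    (q : ℕ → ℕ) (hq1 : q 1 = 1) (hq2 : q 2 = a 1)
    (hqrec : ∀ k : ℕ, 2 ≤ k → q (k + 1) = a k * q k + q (k - 1))
    (τ τ₁ : ℝ) (hτ : 0 < τ) (hτ₁ : τ₁ = 2 / τ + 6)
    (E : Set ℕ) (hE : E = {k : ℕ | 1 < k ∧ ((q k : ℝ)) ^ (1 / τ + 3) < (q (k + 1) : ℝ)})
    (M : Set ℤ) (hM : M = {m : ℤ | ∃ k ∈ E, ∃ j : ℕ, 1 ≤ j ∧ j ≤ a k ∧
      (m = (j * q k : ℕ) ∨ m = -((j * q k : ℕ) : ℤ))})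
    (c : ℤ → ℂ) (C : ℝ) (hC : 0 < C)
    (hdecay : ∀ m : ℤ, m ≠ 0 → ‖c m‖ ≤ C * |(m : ℝ)| ^ (-τ₁)) :
    ∃ ψ : C(AddCircle (1 : ℝ), ℂ),
      HasSum (fun m : {m : ℤ // m ∉ M ∧ m ≠ 0} =>
        (c m / (Complex.exp (2 * Real.pi * Complex.I * (m : ℤ) * α) - 1)) • fourier (m : ℤ))
        ψ := by
  have hq : ∀ n, (α.convergent n).den = q (n + 1) := fun n => by
    have h := dens_eq_of_recurrence
      (get?_s_eq_of_gauss hirr (Set.Ioo_subset_Ico_self hα) hβ1 hGauss) hq1 hq2 hqrec n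
    rw [dens_eq_den_convergent hirr] at h
    exact_mod_cast h
  have hτ_inv : 0 < 1 / τ := one_div_pos.2 hτ
  have hexponent : 1 / τ + 3 + 1 < τ₁ := by rw [hτ₁, div_eq_mul_one_div 2 τ]; linarith
  subst hE hM
  exact uniform_convergence_off_resonant_set_general hirr (by linarith) hexponent
    (resonantSet_subset_of_den_convergent_eq hirr hq hqrec _) hdecay
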